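/- Theorem 2.2 (solutions in irrational directions are viscosity solutions): Let d ≥ 2, let θ, Θ with 0 < θ ≤ Θ, and let m̄ : S^{d-1} → [θ,Θ] be continuous. Let U ⊆ ℝ^d × (0,∞) be open and let ũ : ℝ^d × (0,∞) → ℝ be locally bounded and upper semicontinuous. Suppose there is K > 0 such that for every smooth φ : ℝ^d × (0,∞) → ℝ and every point (x₀,t₀) ∈ U at which ũ − φ has a strict local maximum: (a) if Dφ(x₀,t₀) ∉ ℝℤ^d then m̄(Dφ/‖Dφ‖) φ_t − tr((Id − (Dφ/‖Dφ‖) ⊗ (Dφ/‖Dφ‖)) D²φ) ≤ 0 at (x₀,t₀); (b) if Dφ(x₀,t₀) ∈ ℝℤ^d \ {0} and δ > 0 satisfies ‖(Id − (Dφ/‖Dφ‖) ⊗ (Dφ/‖Dφ‖)) D²φ(x₀,t₀)‖ ≤ δ‖Dφ(x₀,t₀)‖, then φ_t(x₀,t₀) ≤ Kδ‖Dφ(x₀,t₀)‖; (c) if Dφ(x₀,t₀) = 0 and D²φ(x₀,t₀) = 0 then φ_t(x₀,t₀) ≤ 0. Then ũ is a viscosity subsolution of m̄(Dũ/‖Dũ‖)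 ũ_t − tr((Id − (Dũ/‖Dũ‖) ⊗ (Dũ/‖Dũ‖)) D²ũ) = 0 in U, i.e., for every smooth φ and every strict local maximum point (x₀,t₀) ∈ U of ũ − φ: if Dφ(x₀,t₀) ≠ 0 then m̄(Dφ/‖Dφ‖) φ_t − tr((Id − (Dφ/‖Dφ‖) ⊗ (Dφ/‖Dφ‖)) D²φ) ≤ 0 at (x₀,t₀), and if Dφ(x₀,t₀) = 0 and D²φ(x₀,t₀) = 0 then φ_t(x₀,t₀) ≤ 0. -/

import Mathlib

open Set Filter Topology

noncomputable section

abbrev Euc (d : ℕ) := EuclideanSpace ℝ (Fin d)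

/-- p ∈ ℝℤ^d, i.e. p is a real multiple of an integer vector. -/
def RatDir {d : ℕ} (p : Euc d) : Prop :=
  ∃ (c : ℝ) (k : Fin d → ℤ), ∀ i, p i = c * (k i : ℝ)

noncomputable def clTrace {d : ℕ} (A : Euc d →L[ℝ] Euc d) : ℝ :=
  LinearMap.trace ℝ (Euc d) (A : Euc d →ₗ[ℝ] Euc d)

/-- Id − p ⊗ p as a continuous linear map. -/
noncomputable def projPerp {d : ℕ} (p : Euc d) : Euc d →L[ℝ] Euc d :=
  ContinuousLinearMap.id ℝ (Euc d) - (innerSL ℝ p).smulRight p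

noncomputable def spaceGrad {d : ℕ} (φ : Euc d × ℝ → ℝ) (x : Euc d) (t : ℝ) : Euc d :=
  gradient (fun y => φ (y, t)) x

noncomputable def spaceHess {d : ℕ} (φ : Euc d × ℝ → ℝ) (x : Euc d) (t : ℝ) :
    Euc d →L[ℝ] Euc d :=
  fderiv ℝ (fun y => gradient (fun z => φ (z, t)) y) x

noncomputable def timeDeriv {d : ℕ} (φ : Euc d × ℝ → ℝ) (x : Euc d) (t : ℝ) : ℝ :=
  deriv (fun s => φ (x, s)) t

/-- The effective level-set operator m̄(p̂) φ_t − tr((Id − p̂⊗p̂) D²φ) at a point,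
for p̂ the normalized spatial gradient. -/
noncomputable def effOp {d : ℕ} (mb : Euc d → ℝ) (φ : Euc d × ℝ → ℝ)
    (x : Euc d) (t : ℝ) : ℝ :=
  mb (‖spaceGrad φ x t‖⁻¹ • spaceGrad φ x t) * timeDeriv φ x t -
    clTrace ((projPerp (‖spaceGrad φ x t‖⁻¹ • spaceGrad φ x t)).comp (spaceHess φ x t))

/-- f has a strict local maximum at p. -/
def StrictLocalMax {X : Type*} [TopologicalSpace X] (f : X → ℝ) (p : X) : Prop :=
  ∃ V ∈ nhds p, ∀ q ∈ V, q ≠ p → f q < f p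

namespace SpaceTimeJet

variable {d : ℕ}

/-- The spatial part of a linear form on space-time, identified with a vector. -/
def gradPart (d : ℕ) : (Euc d × ℝ →L[ℝ] ℝ) →L[ℝ] Euc d where
  toFun L := (InnerProductSpace.toDual ℝ (Euc d)).symm
    (L.comp (ContinuousLinearMap.inl ℝ (Euc d) ℝ))
  map_add' L M := by simp [ContinuousLinearMap.add_comp]
  map_smul' c L := by simp [ContinuousLinearMap.smul_comp]
  cont := by
    refine (InnerProductSpace.toDual ℝ (Euc d)).symm.continuous.comp ?_
    fun_prop

/-- The spatial part of a bilinear form on space-time, identified with an operator. -/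
def hessPart (A : Euc d × ℝ →L[ℝ] Euc d × ℝ →L[ℝ] ℝ) : Euc d →L[ℝ] Euc d :=
  (gradPart d).comp (A.comp (ContinuousLinearMap.inl ℝ (Euc d) ℝ))

lemma inner_gradPart (L : Euc d × ℝ →L[ℝ] ℝ) (v : Euc d) :
    inner ℝ (gradPart d L) v = L (v, 0) := by
  simp [gradPart]

lemma inner_hessPart (A : Euc d × ℝ →L[ℝ] Euc d × ℝ →L[ℝ] ℝ) (v w : Euc d) :
    inner ℝ (hessPart A v) w = A (v, 0) (w, 0) := by
  simp [hessPart, inner_gradPart]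

lemma hessPart_add (A B : Euc d × ℝ →L[ℝ] Euc d × ℝ →L[ℝ] ℝ) :
    hessPart (A + B) = hessPart A + hessPart B := by
  ext1 v; simp [hessPart]

lemma hessPart_smul (c : ℝ) (A : Euc d × ℝ →L[ℝ] Euc d × ℝ →L[ℝ] ℝ) :
    hessPart (c • A) = c • hessPart A := by
  ext1 v; simp [hessPart]

/-- The effective operator as a function of the space-time jet. -/
def jetOp (mb : Euc d → ℝ) (L : Euc d × ℝ →L[ℝ] ℝ)
    (A : Euc d × ℝ →L[ℝ] Euc d × ℝ →L[ℝ] ℝ) : ℝ :=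
  mb (‖gradPart d L‖⁻¹ • gradPart d L) * L (0, 1) -
    clTrace ((projPerp (‖gradPart d L‖⁻¹ • gradPart d L)).comp (hessPart A))

lemma spaceGrad_eq {φ : Euc d × ℝ → ℝ} (hφ : Differentiable ℝ φ) (x : Euc d) (t : ℝ) :
    spaceGrad φ x t = gradPart d (fderiv ℝ φ (x, t)) := by
  have h : HasFDerivAt (fun y => φ (y, t))
      ((fderiv ℝ φ (x, t)).comp (ContinuousLinearMap.inl ℝ (Euc d) ℝ)) x :=
    (hφ (x, t)).hasFDerivAt.comp x (hasFDerivAt_prodMk_left x t)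
  simp [spaceGrad, gradient, gradPart, h.fderiv]

lemma spaceHess_eq {φ : Euc d × ℝ → ℝ} (hφ : Differentiable ℝ φ)
    (hφ' : Differentiable ℝ (fderiv ℝ φ)) (x : Euc d) (t : ℝ) :
    spaceHess φ x t = hessPart (fderiv ℝ (fderiv ℝ φ) (x, t)) := by
  have h : HasFDerivAt (fun y => gradPart d (fderiv ℝ φ (y, t)))
      (hessPart (fderiv ℝ (fderiv ℝ φ) (x, t))) x :=
    (gradPart d).hasFDerivAt.comp x
      ((hφ' (x, t)).hasFDerivAt.comp x (hasFDerivAt_prodMk_left x t))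
  have e : (fun y => gradient (fun z => φ (z, t)) y) =
      fun y => gradPart d (fderiv ℝ φ (y, t)) := by
    funext y; exact spaceGrad_eq hφ y t
  rw [spaceHess, e, h.fderiv]

lemma timeDeriv_eq {φ : Euc d × ℝ → ℝ} (hφ : Differentiable ℝ φ) (x : Euc d) (t : ℝ) :
    timeDeriv φ x t = fderiv ℝ φ (x, t) (0, 1) := by
  have h : HasFDerivAt (fun s => φ (x, s))
      ((fderiv ℝ φ (x, t)).comp (ContinuousLinearMap.inr ℝ (Euc d) ℝ)) t :=
    (hφ (x, t)).hasFDerivAt.comp t (hasFDerivAt_prodMk_right x t)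
  simp [timeDeriv, h.hasDerivAt.deriv]

lemma effOp_eq (mb : Euc d → ℝ) {φ : Euc d × ℝ → ℝ} (hφ : Differentiable ℝ φ)
    (hφ' : Differentiable ℝ (fderiv ℝ φ)) (x : Euc d) (t : ℝ) :
    effOp mb φ x t = jetOp mb (fderiv ℝ φ (x, t)) (fderiv ℝ (fderiv ℝ φ) (x, t)) := by
  rw [effOp, jetOp, spaceGrad_eq hφ, spaceHess_eq hφ hφ', timeDeriv_eq hφ]

section Quadratic

variable {E : Type*} [NormedAddCommGroup E] [NormedSpace ℝ E]

/-- The quadratic function with prescribed value zero and prescribed jet at `z₁`. -/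
def quadFn (z₁ : E) (L : E →L[ℝ] ℝ) (A : E →L[ℝ] E →L[ℝ] ℝ) (z : E) : ℝ :=
  L (z - z₁) + (1 / 2) * A (z - z₁) (z - z₁)

lemma hasFDerivAt_quadFn (z₁ : E) (L : E →L[ℝ] ℝ) {A : E →L[ℝ] E →L[ℝ] ℝ}
    (hA : ∀ v w, A v w = A w v) (z : E) :
    HasFDerivAt (quadFn z₁ L A) (L + A (z - z₁)) z := by
  have h0 : HasFDerivAt (fun z => z - z₁) (ContinuousLinearMap.id ℝ E) z :=
    (hasFDerivAt_id z).sub_const z₁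
  have h1 := L.hasFDerivAt.comp z h0
  have h2 := (A.hasFDerivAt.comp z h0).clm_apply h0
  refine (h1.add (h2.const_mul (1 / 2 : ℝ))).congr_fderiv (ContinuousLinearMap.ext fun v => ?_)
  simp [hA v z, hA v z₁]
  ring

lemma fderiv_quadFn (z₁ : E) (L : E →L[ℝ] ℝ) {A : E →L[ℝ] E →L[ℝ] ℝ}
    (hA : ∀ v w, A v w = A w v) :
    fderiv ℝ (quadFn z₁ L A) = fun z => L + A (z - z₁) :=
  funext fun z => (hasFDerivAt_quadFn z₁ L hA z).fderiv

lemma fderiv_fderiv_quadFn (z₁ : E) (L : E →L[ℝ] ℝ) {A : E →L[ℝ] E →L[ℝ] ℝ}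
    (hA : ∀ v w, A v w = A w v) (z : E) :
    fderiv ℝ (fderiv ℝ (quadFn z₁ L A)) z = A := by
  rw [fderiv_quadFn z₁ L hA]
  have h0 : HasFDerivAt (fun z => z - z₁) (ContinuousLinearMap.id ℝ E) z :=
    (hasFDerivAt_id z).sub_const z₁
  exact ((A.hasFDerivAt.comp z h0).const_add L).fderiv

lemma contDiff_quadFn (z₁ : E) (L : E →L[ℝ] ℝ) (A : E →L[ℝ] E →L[ℝ] ℝ)
    (n : WithTop ℕ∞) : ContDiff ℝ n (quadFn z₁ L A) := by
  unfold quadFn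
  fun_prop

/-- Second-order Taylor upper bound with a small quadratic error. -/
lemma eventually_le_quadFn {φ : E → ℝ} (hφ : Differentiable ℝ φ)
    (hφ' : Differentiable ℝ (fderiv ℝ φ)) (z₀ : E)
    (hA : ∀ v w, fderiv ℝ (fderiv ℝ φ) z₀ v w = fderiv ℝ (fderiv ℝ φ) z₀ w v)
    {ε : ℝ} (hε : 0 < ε) :
    ∀ᶠ z in 𝓝 z₀, φ z ≤ φ z₀ + quadFn z₀ (fderiv ℝ φ z₀) (fderiv ℝ (fderiv ℝ φ) z₀) z
      + ε * ‖z - z₀‖ ^ 2 := by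
  set L := fderiv ℝ φ z₀
  set A := fderiv ℝ (fderiv ℝ φ) z₀
  have hr : ∀ z, HasFDerivAt (fun z => φ z - quadFn z₀ L A z)
      (fderiv ℝ φ z - (L + A (z - z₀))) z := fun z =>
    (hφ z).hasFDerivAt.sub (hasFDerivAt_quadFn z₀ L hA z)
  have hlo := (hφ' z₀).hasFDerivAt.isLittleO.def hε
  obtain ⟨ρ, hρ, hball⟩ := Metric.eventually_nhds_iff_ball.1 hlo
  filter_upwards [Metric.ball_mem_nhds z₀ hρ] with z hz
  have hseg : ∀ y ∈ segment ℝ z₀ z, ‖fderiv ℝ φ y - (L + A (y - z₀))‖ ≤ ε * ‖z - z₀‖ := by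
    intro y hy
    have hy1 : ‖y - z₀‖ ≤ ‖z - z₀‖ := by
      have := norm_sub_le_of_mem_segment hy
      simpa using this
    have hyb : y ∈ Metric.ball z₀ ρ := by
      rw [Metric.mem_ball, dist_eq_norm] at hz ⊢
      exact hy1.trans_lt hz
    have := hball y hyb
    rw [← sub_sub]
    exact this.trans (by gcongr)
  have := (convex_segment z₀ z).norm_image_sub_le_of_norm_hasFDerivWithin_le
    (fun y _ => (hr y).hasFDerivWithinAt) hseg (left_mem_segment ℝ z₀ z)
    (right_mem_segment ℝ z₀ z)
  have h0 : quadFn z₀ L A z₀ = 0 := by simp [quadFn]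
  rw [h0, Real.norm_eq_abs] at this
  have := (abs_le.1 this).2
  nlinarith

end Quadratic

/-- A function on the unit interval with affine subgradient selection `α + s β` is dominated by
the corresponding quadratic. -/
lemma le_of_affine_subgradient {f : ℝ → ℝ} {α β : ℝ}
    (h : ∀ s ∈ Icc (0 : ℝ) 1, ∀ t ∈ Icc (0 : ℝ) 1, (t - s) * (α + s * β) ≤ f t - f s) :
    f 1 ≤ f 0 + α + β / 2 := by
  have key : ∀ n : ℕ, ∀ s ∈ Icc (0 : ℝ) 1, ∀ t ∈ Icc (0 : ℝ) 1,
      f t - f s - (t - s) * α - β / 2 * (t ^ 2 - s ^ 2)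
        ≤ |β| / 2 * (t - s) ^ 2 * (1 / 2) ^ n := by
    intro n
    induction n with
    | zero =>
      intro s hs t ht
      have h1 := h t ht s hs
      have h2 : β * (t - s) ^ 2 ≤ |β| * (t - s) ^ 2 := by
        gcongr; exact le_abs_self β
      simp only [pow_zero, mul_one]
      nlinarith
    | succ n ih =>
      intro s hs t ht
      have hm : (s + t) / 2 ∈ Icc (0 : ℝ) 1 := by
        constructor <;> linarith [hs.1, hs.2, ht.1, ht.2]
      have h1 := ih s hs _ hm
      have h2 := ih _ hm t ht
      have e : |β| / 2 * (t - s) ^ 2 * (1 / 2) ^ (n + 1) =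
        |β| / 2 * ((s + t) / 2 - s) ^ 2 * (1 / 2) ^ n
          + |β| / 2 * (t - (s + t) / 2) ^ 2 * (1 / 2) ^ n := by ring
      rw [e]
      linarith
  have lim : Tendsto (fun n : ℕ => |β| / 2 * ((1 : ℝ) - 0) ^ 2 * (1 / 2) ^ n) atTop (𝓝 0) := by
    have := (tendsto_pow_atTop_nhds_zero_of_lt_one (r := (1 / 2 : ℝ)) (by norm_num)
      (by norm_num)).const_mul (|β| / 2 * ((1 : ℝ) - 0) ^ 2)
    simpa using this
  have := ge_of_tendsto' lim fun n => key n 0 (by simp) 1 (by simp)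
  linarith

lemma projPerp_apply (e v : Euc d) : projPerp e v = v - inner ℝ e v • e := by
  simp [projPerp]

/-- The trace of the tangential part of an operator that is nonnegative on `e⊥`. -/
lemma clTrace_projPerp_comp_nonneg {e : Euc d} (he : ‖e‖ = 1) {H : Euc d →L[ℝ] Euc d}
    (hH : ∀ v, inner ℝ e v = 0 → 0 ≤ inner ℝ (H v) v) :
    0 ≤ clTrace ((projPerp e).comp H) := by
  have hee : inner ℝ e e = (1 : ℝ) := by simp [he]
  have horth : ∀ v, inner ℝ e (projPerp e v) = (0 : ℝ) := fun v => by
    simp [projPerp_apply, inner_sub_right, inner_smul_right, he]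
  have hidem : (projPerp e).comp (projPerp e) = projPerp e := by
    ext1 v
    rw [ContinuousLinearMap.comp_apply, projPerp_apply e (projPerp e v), horth]
    simp
  have hsymm : ∀ v w, inner ℝ v (projPerp e w) = inner ℝ (projPerp e v) w := fun v w => by
    simp [projPerp_apply, inner_sub_right, inner_sub_left, inner_smul_right, inner_smul_left,
      real_inner_comm e v]
    ring
  have hcyc : clTrace ((projPerp e).comp H) =
      clTrace ((projPerp e).comp (H.comp (projPerp e))) := by
    conv_lhs => rw [← hidem]
    unfold clTrace
    exact LinearMap.trace_mul_comm ℝ (projPerp e : Euc d →ₗ[ℝ] Euc d)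
      ((projPerp e : Euc d →ₗ[ℝ] Euc d) * (H : Euc d →ₗ[ℝ] Euc d))
  rw [hcyc, clTrace, LinearMap.trace_eq_sum_inner _ (EuclideanSpace.basisFun (Fin d) ℝ)]
  refine Finset.sum_nonneg fun i _ => ?_
  simp only [ContinuousLinearMap.coe_coe, ContinuousLinearMap.comp_apply]
  rw [hsymm, real_inner_comm]
  exact hH _ (horth _)

lemma clTrace_add (A B : Euc d →L[ℝ] Euc d) : clTrace (A + B) = clTrace A + clTrace B := by
  simp [clTrace]

lemma clTrace_smul (c : ℝ) (A : Euc d →L[ℝ] Euc d) : clTrace (c • A) = c * clTrace A := by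
  simp [clTrace]

/-- The Euclidean inner product on space-time as a bilinear form. -/
def spaceTimeInner (d : ℕ) : Euc d × ℝ →L[ℝ] Euc d × ℝ →L[ℝ] ℝ :=
  (innerSL ℝ).bilinearComp (ContinuousLinearMap.fst ℝ (Euc d) ℝ)
      (ContinuousLinearMap.fst ℝ (Euc d) ℝ) +
    (innerSL ℝ).bilinearComp (ContinuousLinearMap.snd ℝ (Euc d) ℝ)
      (ContinuousLinearMap.snd ℝ (Euc d) ℝ)

lemma spaceTimeInner_apply (v w : Euc d × ℝ) :
    spaceTimeInner d v w = inner ℝ v.1 w.1 + v.2 * w.2 := by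
  simp [spaceTimeInner, mul_comm]

lemma spaceTimeInner_comm (v w : Euc d × ℝ) :
    spaceTimeInner d v w = spaceTimeInner d w v := by
  rw [spaceTimeInner_apply, spaceTimeInner_apply, real_inner_comm, mul_comm]

lemma norm_sq_le_spaceTimeInner (v : Euc d × ℝ) : ‖v‖ ^ 2 ≤ spaceTimeInner d v v := by
  rw [spaceTimeInner_apply, real_inner_self_eq_norm_sq, Prod.norm_def, Real.norm_eq_abs]
  rcases max_cases ‖v.1‖ |v.2| with h | h <;> rw [h.1]
  · nlinarith [sq_nonneg v.2]
  · nlinarith [sq_nonneg ‖v.1‖, sq_abs v.2]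

lemma jetOp_add_smul (mb : Euc d → ℝ) (L : Euc d × ℝ →L[ℝ] ℝ)
    (A B : Euc d × ℝ →L[ℝ] Euc d × ℝ →L[ℝ] ℝ) (c : ℝ) :
    jetOp mb L (A + c • B) = jetOp mb L A -
      c * clTrace ((projPerp (‖gradPart d L‖⁻¹ • gradPart d L)).comp (hessPart B)) := by
  rw [jetOp, jetOp, hessPart_add, hessPart_smul, ContinuousLinearMap.comp_add,
    ContinuousLinearMap.comp_smul, clTrace_add, clTrace_smul]
  ring

lemma jetOp_nonpos_of_forall_pos {mb : Euc d → ℝ} {L : Euc d × ℝ →L[ℝ] ℝ}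
    {A B : Euc d × ℝ →L[ℝ] Euc d × ℝ →L[ℝ] ℝ}
    (h : ∀ ε > 0, jetOp mb L (A + (ε : ℝ) • B) ≤ 0) : jetOp mb L A ≤ 0 := by
  simp only [jetOp_add_smul] at h
  set T := clTrace ((projPerp (‖gradPart d L‖⁻¹ • gradPart d L)).comp (hessPart B))
  refine le_of_forall_pos_le_add fun η hη => ?_
  have h1 := h (η / (|T| + 1)) (by positivity)
  have h2 : η / (|T| + 1) * T ≤ η := by
    rw [div_mul_eq_mul_div, div_le_iff₀ (by positivity)]
    nlinarith [le_abs_self T]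
  linarith

/-- `(L, A)` is a second-order superjet of `u` at `z₁`. -/
def IsSuperjet {E : Type*} [NormedAddCommGroup E] [NormedSpace ℝ E] (u : E → ℝ) (z₁ : E)
    (L : E →L[ℝ] ℝ) (A : E →L[ℝ] E →L[ℝ] ℝ) : Prop :=
  (∀ v w, A v w = A w v) ∧ ∀ᶠ z in 𝓝 z₁, u z ≤ u z₁ + quadFn z₁ L A z

lemma IsSuperjet.strictLocalMax {u : Euc d × ℝ → ℝ} {z₁ : Euc d × ℝ}
    {L : Euc d × ℝ →L[ℝ] ℝ} {A : Euc d × ℝ →L[ℝ] Euc d × ℝ →L[ℝ] ℝ}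
    (h : IsSuperjet u z₁ L A) {ε : ℝ} (hε : 0 < ε) :
    StrictLocalMax (fun z => u z - quadFn z₁ L (A + ε • spaceTimeInner d) z) z₁ := by
  refine ⟨_, h.2, fun z hz hne => ?_⟩
  have h1 := norm_sq_le_spaceTimeInner (z - z₁)
  have h2 : 0 < ‖z - z₁‖ := norm_pos_iff.2 (sub_ne_zero.2 hne)
  have h3 : 0 < ε * spaceTimeInner d (z - z₁) (z - z₁) := mul_pos hε (by nlinarith)
  simp only [mem_ofPred_eq] at hz
  simp only [quadFn, sub_self, map_zero, add_apply,
    smul_apply, smul_eq_mul] at hz ⊢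
  simp only [mul_zero]
  linarith

section PerturbedMaxima

variable {E : Type*} [NormedAddCommGroup E] [NormedSpace ℝ E]

/-- `z` maximizes `f - ξ` over `N`. -/
def IsPertMax (f : E → ℝ) (N : Set E) (ξ : E →L[ℝ] ℝ) (z : E) : Prop :=
  z ∈ N ∧ ∀ z' ∈ N, f z' - ξ z' ≤ f z - ξ z

lemma exists_isPertMax {f : E → ℝ} {N : Set E} (hN : IsCompact N) (hne : N.Nonempty)
    (hf : UpperSemicontinuousOn f N) (ξ : E →L[ℝ] ℝ) : ∃ z, IsPertMax f N ξ z := by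
  have h : UpperSemicontinuousOn (fun z => f z + -ξ z) N :=
    hf.add (ContinuousOn.upperSemicontinuousOn (by fun_prop))
  obtain ⟨z, hz, hmax⟩ := h.exists_isMaxOn hne hN
  exact ⟨z, hz, fun z' hz' => by simpa [sub_eq_add_neg] using hmax hz'⟩

lemma isClosed_setOf_exists_isPertMax {f : E → ℝ} {N : Set E} (hN : IsCompact N)
    (hf : UpperSemicontinuousOn f N) {F : Type*} [TopologicalSpace F]
    {G : (E →L[ℝ] ℝ) → E → F} (hG : Continuous fun p : (E →L[ℝ] ℝ) × E => G p.1 p.2)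
    {C : Set F} (hC : IsClosed C) :
    IsClosed {ξ : E →L[ℝ] ℝ | ∃ z, IsPertMax f N ξ z ∧ G ξ z ∈ C} := by
  refine IsSeqClosed.isClosed fun ξs ξ hmem hlim => ?_
  choose zs hmax hzC using hmem
  obtain ⟨z, hz, σ, hσ, hzlim⟩ := hN.tendsto_subseq fun n => (hmax n).1
  have hξlim : Tendsto (ξs ∘ σ) atTop (𝓝 ξ) := hlim.comp hσ.tendsto_atTop
  refine ⟨z, ⟨hz, fun z' hz' => ?_⟩, ?_⟩
  · have hap {w : ℕ → E} {w₀ : E} (hw : Tendsto w atTop (𝓝 w₀)) :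
        Tendsto (fun n => (ξs ∘ σ) n (w n)) atTop (𝓝 (ξ w₀)) :=
      ((isBoundedBilinearMap_apply (𝕜 := ℝ) (E := E) (F := ℝ)).continuous.tendsto (ξ, w₀)).comp
        (hξlim.prodMk_nhds hw)
    have hc : Tendsto (fun n => f z' - (ξs ∘ σ) n z' + (ξs ∘ σ) n ((zs ∘ σ) n)) atTop
        (𝓝 (f z' - ξ z' + ξ z)) :=
      (tendsto_const_nhds.sub (hap tendsto_const_nhds)).add (hap hzlim)
    by_contra! hlt
    obtain ⟨y, hy1, hy2⟩ := exists_between (show f z < f z' - ξ z' + ξ z by linarith)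
    have hw : Tendsto (zs ∘ σ) atTop (𝓝[N] z) :=
      tendsto_nhdsWithin_iff.2 ⟨hzlim, .of_forall fun n => (hmax _).1⟩
    obtain ⟨n, h1, h2⟩ := ((hw.eventually (hf z hz y hy1)).and (hc.eventually_const_lt hy2)).exists
    have := (hmax (σ n)).2 z' hz'
    simp only [Function.comp_apply] at h1 h2
    linarith
  · exact hC.mem_of_tendsto ((hG.tendsto (ξ, z)).comp (hξlim.prodMk_nhds hzlim))
      (.of_forall fun n => hzC _)

/-- Baire category on a ball. -/
lemma exists_mem_interior_of_ball_subset {X : Type*} [PseudoMetricSpace X] [BaireSpace X]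
    {ι : Type*} [Countable ι] {F : ι → Set X} (hF : ∀ i, IsClosed (F i)) {x : X} {r : ℝ}
    (hr : 0 < r) (hcov : Metric.ball x r ⊆ ⋃ i, F i) :
    ∃ i, ∃ y ∈ Metric.ball x r, y ∈ interior (F i) := by
  let F' : Option ι → Set X := fun o => o.elim (Metric.ball x r)ᶜ F
  have hc : ∀ o, IsClosed (F' o) := by
    rintro (_ | i)
    · exact Metric.isOpen_ball.isClosed_compl
    · exact hF i
  have hU : ⋃ o, F' o = univ := by
    refine eq_univ_of_forall fun y => ?_
    by_cases hy : y ∈ Metric.ball x r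
    · obtain ⟨i, hi⟩ := mem_iUnion.1 (hcov hy)
      exact mem_iUnion.2 ⟨some i, hi⟩
    · exact mem_iUnion.2 ⟨none, hy⟩
  obtain ⟨y, hyB, hyU⟩ := (dense_iUnion_interior_of_closed hc hU).inter_open_nonempty _
    Metric.isOpen_ball ⟨x, Metric.mem_ball_self hr⟩
  obtain ⟨o, ho⟩ := mem_iUnion.1 hyU
  rcases o with _ | i
  · exact absurd hyB (interior_subset ho)
  · exact ⟨i, y, hyB, ho⟩

variable {u : E → ℝ} {z₀ : E} {L : E →L[ℝ] ℝ} {A : E →L[ℝ] E →L[ℝ] ℝ} {N : Set E}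

/-- If the perturbed contact gradients annihilate `W` for an open set of perturbations, then the
contact inequality can be improved along `W`. -/
lemma tilted_bound (hA : ∀ v w, A v w = A w v) {W : Submodule ℝ E}
    {ξ₀ : E →L[ℝ] ℝ} {r₀ : ℝ} {z : (E →L[ℝ] ℝ) → E}
    (hz : ∀ ξ ∈ Metric.ball ξ₀ r₀, IsPertMax (fun y => u y - quadFn z₀ L A y) N ξ (z ξ))
    (hW : ∀ ξ ∈ Metric.ball ξ₀ r₀, ∀ v ∈ W, (L + ξ + A (z ξ - z₀)) v = 0)
    {v : E} (hv : v ∈ W) (hvr : ‖A v‖ < r₀) :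
    0 ≤ A v v ∧ ∀ y ∈ N, u y ≤ u (z ξ₀) +
      (quadFn z₀ L A y - quadFn z₀ L A (z ξ₀)) + ξ₀ (y - z ξ₀) + A v (y - z ξ₀)
        + A v v / 2 := by
  have hball : ∀ s ∈ Icc (0 : ℝ) 1, ξ₀ + s • A v ∈ Metric.ball ξ₀ r₀ := by
    intro s hs
    rw [Metric.mem_ball, dist_eq_norm, add_sub_cancel_left, norm_smul, Real.norm_eq_abs,
      abs_of_nonneg hs.1]
    exact (mul_le_of_le_one_left (norm_nonneg _) hs.2).trans_lt hvr
  set f : E → ℝ := fun y => u y - quadFn z₀ L A y with hf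
  set val : ℝ → ℝ := fun s => f (z (ξ₀ + s • A v)) - (ξ₀ + s • A v) (z (ξ₀ + s • A v)) with hval
  have hsub : ∀ s ∈ Icc (0 : ℝ) 1, ∀ t ∈ Icc (0 : ℝ) 1,
      (t - s) * (-A v (z ξ₀) + s * A v v) ≤ val t - val s := by
    intro s hs t ht
    have h0 : (0 : ℝ) ∈ Icc (0 : ℝ) 1 := by simp
    have h1 := (hz _ (hball t ht)).2 _ (hz _ (hball s hs)).1
    have h2 := hW _ (hball s hs) v hv
    have h3 := hW _ (hball 0 h0) v hv
    simp only [add_apply, smul_apply, smul_eq_mul, zero_smul, add_zero,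
      sub_apply, map_sub, hA (z _) v] at h1 h2 h3
    have h4 : A v (z (ξ₀ + s • A v)) = A v (z ξ₀) - s * A v v := by linarith
    simp only [hval, add_apply, smul_apply, smul_eq_mul]
    rw [h4] at h1 ⊢
    nlinarith
  have hle := le_of_affine_subgradient hsub
  constructor
  · have h1 := hsub 0 (by simp) 1 (by simp)
    have h2 := hsub 1 (by simp) 0 (by simp)
    linarith
  · intro y hy
    have h1 := (hz _ (hball 1 (by simp))).2 y hy
    have h2 : f y - (ξ₀ + (1 : ℝ) • A v) y ≤ val 1 := h1
    have h3 : val 0 = f (z ξ₀) - ξ₀ (z ξ₀) := by simp [hval]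
    rw [h3] at hle
    simp only [hf, add_apply, one_smul] at h2 hle
    simp only [map_sub]
    linarith

lemma quadFn_sub_quadFn (hA : ∀ v w, A v w = A w v) (z₁ y : E) :
    quadFn z₀ L A y - quadFn z₀ L A z₁ = quadFn z₁ (L + A (z₁ - z₀)) A y := by
  obtain ⟨h, rfl⟩ : ∃ h, y = z₁ + h := ⟨y - z₁, by simp⟩
  have e : z₁ + h - z₀ = (z₁ - z₀) + h := by abel
  simp only [quadFn, e, add_sub_cancel_left, map_add, add_apply, hA h (z₁ - z₀)]
  ring

lemma nonneg_of_contact_annihilates (hA : ∀ v w, A v w = A w v) {W : Submodule ℝ E}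
    {ξ₀ : E →L[ℝ] ℝ} {r₀ : ℝ} (hr₀ : 0 < r₀) {z : (E →L[ℝ] ℝ) → E}
    (hz : ∀ ξ ∈ Metric.ball ξ₀ r₀, IsPertMax (fun y => u y - quadFn z₀ L A y) N ξ (z ξ))
    (hW : ∀ ξ ∈ Metric.ball ξ₀ r₀, ∀ v ∈ W, (L + ξ + A (z ξ - z₀)) v = 0)
    {v : E} (hv : v ∈ W) : 0 ≤ A v v := by
  have hc : 0 < r₀ / (‖A v‖ + 1) := by positivity
  set c := r₀ / (‖A v‖ + 1) with hcdef
  have hlt : ‖A (c • v)‖ < r₀ := by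
    rw [map_smul, norm_smul, Real.norm_eq_abs, abs_of_pos hc, hcdef, div_mul_eq_mul_div,
      div_lt_iff₀ (by positivity)]
    nlinarith
  have h := (tilted_bound hA hz hW (W.smul_mem c hv) hlt).1
  simp only [map_smul, smul_apply, smul_eq_mul] at h
  exact nonneg_of_mul_nonneg_right (nonneg_of_mul_nonneg_right h hc) hc

lemma isSuperjet_of_contact_annihilates (hA : ∀ v w, A v w = A w v) {W : Submodule ℝ E}
    {ξ₀ : E →L[ℝ] ℝ} {r₀ : ℝ} (hr₀ : 0 < r₀) {z : (E →L[ℝ] ℝ) → E}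
    (hz : ∀ ξ ∈ Metric.ball ξ₀ r₀, IsPertMax (fun y => u y - quadFn z₀ L A y) N ξ (z ξ))
    (hW : ∀ ξ ∈ Metric.ball ξ₀ r₀, ∀ v ∈ W, (L + ξ + A (z ξ - z₀)) v = 0)
    (hinterior : N ∈ 𝓝 (z ξ₀)) {σ : E →L[ℝ] E} (hσ : ∀ h, σ h - h ∈ W) :
    IsSuperjet u (z ξ₀) (L + ξ₀ + A (z ξ₀ - z₀)) (A.bilinearComp σ σ) := by
  refine ⟨fun v w => by simp [hA (σ v)], ?_⟩
  have hcont : ContinuousAt (fun y => ‖A (σ (y - z ξ₀) - (y - z ξ₀))‖) (z ξ₀) := by fun_prop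
  have hsmall : ∀ᶠ y in 𝓝 (z ξ₀), ‖A (σ (y - z ξ₀) - (y - z ξ₀))‖ < r₀ :=
    hcont.eventually_lt_const (by simpa using hr₀)
  filter_upwards [hsmall, hinterior] with y hy hyN
  have h := (tilted_bound hA hz hW (hσ (y - z ξ₀)) hy).2 y hyN
  rw [quadFn_sub_quadFn hA] at h
  refine h.trans (le_of_eq ?_)
  simp only [quadFn, map_sub, add_apply, sub_apply, ContinuousLinearMap.bilinearComp_apply]
  simp only [hA y (σ y), hA y (σ (z ξ₀)), hA (z ξ₀) (σ y), hA (z ξ₀) (σ (z ξ₀)),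
    hA (z ξ₀) y, hA (σ (z ξ₀)) (σ y)]
  ring

end PerturbedMaxima

section Main

variable {mb : Euc d → ℝ} {U : Set (Euc d × ℝ)} {ut : Euc d × ℝ → ℝ}

/-- The contact conditions of a subsolution in irrational directions. -/
def IrrationalSubsolution (mb : Euc d → ℝ) (U : Set (Euc d × ℝ)) (ut : Euc d × ℝ → ℝ)
    (K : ℝ) : Prop :=
  ∀ φ : Euc d × ℝ → ℝ, ContDiff ℝ (⊤ : ℕ∞) φ →
    ∀ (x : Euc d) (t : ℝ), (x, t) ∈ U →
      StrictLocalMax (fun p => ut p - φ p) (x, t) →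
      (¬ RatDir (spaceGrad φ x t) → effOp mb φ x t ≤ 0) ∧
      (RatDir (spaceGrad φ x t) → spaceGrad φ x t ≠ 0 →
        ∀ δ > 0,
          ‖(projPerp (‖spaceGrad φ x t‖⁻¹ • spaceGrad φ x t)).comp (spaceHess φ x t)‖
            ≤ δ * ‖spaceGrad φ x t‖ →
          timeDeriv φ x t ≤ K * δ * ‖spaceGrad φ x t‖) ∧
      (spaceGrad φ x t = 0 → spaceHess φ x t = 0 → timeDeriv φ x t ≤ 0)

lemma IsSuperjet.symm_add {u : Euc d × ℝ → ℝ} {z₁ : Euc d × ℝ}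
    {L : Euc d × ℝ →L[ℝ] ℝ} {A : Euc d × ℝ →L[ℝ] Euc d × ℝ →L[ℝ] ℝ}
    (h : IsSuperjet u z₁ L A) (ε : ℝ) (v w : Euc d × ℝ) :
    (A + ε • spaceTimeInner d) v w = (A + ε • spaceTimeInner d) w v := by
  simp only [add_apply, smul_apply, h.1 v w, spaceTimeInner_comm v w]

lemma differentiable_fderiv_quadFn {E : Type*} [NormedAddCommGroup E] [NormedSpace ℝ E]
    (z₁ : E) (L : E →L[ℝ] ℝ) {A : E →L[ℝ] E →L[ℝ] ℝ} (hA : ∀ v w, A v w = A w v) :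
    Differentiable ℝ (fderiv ℝ (quadFn z₁ L A)) := by
  rw [fderiv_quadFn z₁ L hA]
  fun_prop

lemma fderiv_quadFn_self {E : Type*} [NormedAddCommGroup E] [NormedSpace ℝ E]
    (z₁ : E) (L : E →L[ℝ] ℝ) {A : E →L[ℝ] E →L[ℝ] ℝ} (hA : ∀ v w, A v w = A w v) :
    fderiv ℝ (quadFn z₁ L A) z₁ = L := by
  simp [fderiv_quadFn z₁ L hA]

lemma IrrationalSubsolution.jetOp_nonpos {K : ℝ} (h : IrrationalSubsolution mb U ut K)
    {z₁ : Euc d × ℝ} (hz₁ : z₁ ∈ U) {L : Euc d × ℝ →L[ℝ] ℝ}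
    {A : Euc d × ℝ →L[ℝ] Euc d × ℝ →L[ℝ] ℝ} (hj : IsSuperjet ut z₁ L A)
    (hL : ¬ RatDir (gradPart d L)) : jetOp mb L A ≤ 0 := by
  refine jetOp_nonpos_of_forall_pos (B := spaceTimeInner d) fun ε hε => ?_
  have hs := hj.symm_add ε
  have hd : Differentiable ℝ (quadFn z₁ L (A + ε • spaceTimeInner d)) :=
    (contDiff_quadFn z₁ L _ 1).differentiable one_ne_zero
  have hd' := differentiable_fderiv_quadFn z₁ L hs
  have := (h _ (contDiff_quadFn z₁ L _ _) z₁.1 z₁.2 hz₁ (hj.strictLocalMax hε)).1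
  rw [spaceGrad_eq hd, effOp_eq mb hd hd', Prod.mk.eta, fderiv_fderiv_quadFn z₁ L hs,
    fderiv_quadFn_self z₁ L hs] at this
  exact this hL

lemma IrrationalSubsolution.time_nonpos {K : ℝ} (h : IrrationalSubsolution mb U ut K)
    {z₁ : Euc d × ℝ} (hz₁ : z₁ ∈ U) {L : Euc d × ℝ →L[ℝ] ℝ}
    {A : Euc d × ℝ →L[ℝ] Euc d × ℝ →L[ℝ] ℝ} (hj : IsSuperjet ut z₁ L A)
    (hL : RatDir (gradPart d L)) (hL0 : gradPart d L ≠ 0)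
    (hflat : (projPerp (‖gradPart d L‖⁻¹ • gradPart d L)).comp (hessPart A) = 0) :
    L (0, 1) ≤ 0 := by
  set P := projPerp (‖gradPart d L‖⁻¹ • gradPart d L) with hP
  set C := ‖P.comp (hessPart (spaceTimeInner d))‖
  have hpos : 0 < ‖gradPart d L‖ := norm_pos_iff.2 hL0
  have key : ∀ ε > 0, L (0, 1) ≤ ε * (K * (C + 1)) := by
    intro ε hε
    have hs := hj.symm_add ε
    have hd : Differentiable ℝ (quadFn z₁ L (A + ε • spaceTimeInner d)) :=
      (contDiff_quadFn z₁ L _ 1).differentiable one_ne_zero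
    have hd' := differentiable_fderiv_quadFn z₁ L hs
    have := (h _ (contDiff_quadFn z₁ L _ _) z₁.1 z₁.2 hz₁ (hj.strictLocalMax hε)).2.1
    rw [spaceGrad_eq hd, spaceHess_eq hd hd', timeDeriv_eq hd, Prod.mk.eta,
      fderiv_fderiv_quadFn z₁ L hs, fderiv_quadFn_self z₁ L hs, ← hP, hessPart_add,
      hessPart_smul, ContinuousLinearMap.comp_add, hflat, zero_add,
      ContinuousLinearMap.comp_smul, norm_smul, Real.norm_eq_abs, abs_of_pos hε] at this
    have hδ : ε * (C + 1) / ‖gradPart d L‖ * ‖gradPart d L‖ = ε * (C + 1) :=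
      div_mul_cancel₀ _ hpos.ne'
    refine (this hL hL0 (ε * (C + 1) / ‖gradPart d L‖) (by positivity) ?_).trans (le_of_eq ?_)
    · rw [hδ]
      gcongr
      linarith
    · rw [mul_assoc, hδ]
      ring
  refine le_of_tendsto_of_tendsto (b := 𝓝[>] (0 : ℝ)) (f := fun _ => L (0, 1))
    (g := fun ε => ε * (K * (C + 1))) tendsto_const_nhds ?_
    (eventually_mem_nhdsWithin.mono fun ε hε => key ε hε)
  have : ContinuousAt (fun ε : ℝ => ε * (K * (C + 1))) 0 := by fun_prop
  simpa using this.tendsto.mono_left nhdsWithin_le_nhds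

/-- An integer vector as a point of Euclidean space. -/
def intVec (k : Fin d → ℤ) : Euc d := WithLp.toLp 2 fun i => (k i : ℝ)

lemma ratDir_iff (p : Euc d) : RatDir p ↔ ∃ k : Fin d → ℤ, p ∈ Submodule.span ℝ {intVec k} := by
  simp only [RatDir, Submodule.mem_span_singleton]
  constructor
  · rintro ⟨c, k, h⟩
    exact ⟨k, c, by ext i; simp [intVec, h i]⟩
  · rintro ⟨k, c, rfl⟩
    exact ⟨c, k, fun i => by simp [intVec]⟩

lemma hessPart_flat {e : Euc d} (he : ‖e‖ = 1)
    (A : Euc d × ℝ →L[ℝ] Euc d × ℝ →L[ℝ] ℝ) {σ : Euc d × ℝ →L[ℝ] Euc d × ℝ}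
    (hσ : ∀ v : Euc d, σ (v, 0) = (inner ℝ e v • e, 0)) :
    (projPerp e).comp (hessPart (A.bilinearComp σ σ)) = 0 := by
  ext1 v
  have h : hessPart (A.bilinearComp σ σ) v = (inner ℝ e v * A (e, 0) (e, 0)) • e := by
    refine ext_inner_right ℝ fun w => ?_
    have hsm : ∀ c : ℝ, ((c • e, 0) : Euc d × ℝ) = c • (e, 0) := fun c => by simp
    rw [inner_hessPart, ContinuousLinearMap.bilinearComp_apply, hσ, hσ, hsm, hsm, map_smul,
      map_smul, smul_apply, inner_smul_left]
    simp
    ring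
  simp [h, projPerp_apply, he]

/-- A strict contact jet is approximated by jets at which the effective inequality holds. -/
lemma IrrationalSubsolution.exists_approx_jetOp_nonpos {K : ℝ}
    (h : IrrationalSubsolution mb U ut K) (hmb : ∀ e : Euc d, ‖e‖ = 1 → 0 ≤ mb e)
    (hUo : IsOpen U) (husc : UpperSemicontinuousOn ut U) {z₀ : Euc d × ℝ} (hz₀ : z₀ ∈ U)
    {L : Euc d × ℝ →L[ℝ] ℝ} {A : Euc d × ℝ →L[ℝ] Euc d × ℝ →L[ℝ] ℝ}
    (hA : ∀ v w, A v w = A w v) {ε : ℝ} (hε : 0 < ε)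
    (hcontact : ∀ᶠ z in 𝓝 z₀, ut z ≤ ut z₀ + quadFn z₀ L A z - ε * ‖z - z₀‖ ^ 2)
    (hL : gradPart d L ≠ 0) {r : ℝ} (hr : 0 < r) :
    ∃ L' : Euc d × ℝ →L[ℝ] ℝ, ‖L' - L‖ < r ∧ jetOp mb L' A ≤ 0 := by
  obtain ⟨r', hr', hball⟩ : ∃ r' > 0, ∀ L' : Euc d × ℝ →L[ℝ] ℝ, ‖L' - L‖ < r' →
      ‖L' - L‖ < r ∧ gradPart d L' ≠ 0 := by
    have h1 : ∀ᶠ L' in 𝓝 L, gradPart d L' ≠ 0 :=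
      (gradPart d).continuous.continuousAt.eventually_ne hL
    obtain ⟨s, hs, hs'⟩ := Metric.eventually_nhds_iff.1 h1
    exact ⟨min r s, lt_min hr hs, fun L' hL' => ⟨hL'.trans_le (min_le_left _ _),
      hs' (by rw [dist_eq_norm]; exact hL'.trans_le (min_le_right _ _))⟩⟩
  obtain ⟨ρ, hρ, hρN⟩ := Metric.nhds_basis_closedBall.mem_iff.1
    (hcontact.and (hUo.mem_nhds hz₀))
  set N := Metric.closedBall z₀ ρ
  have hNU : N ⊆ U := fun z hz => (hρN hz).2
  have hNc : IsCompact N := isCompact_closedBall z₀ ρ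
  set f : Euc d × ℝ → ℝ := fun z => ut z - quadFn z₀ L A z with hf
  have hfusc : UpperSemicontinuousOn f N := by
    have : UpperSemicontinuousOn (fun z => ut z + -quadFn z₀ L A z) N :=
      (husc.mono hNU).add
        ((contDiff_quadFn z₀ L A 0).continuous.neg.continuousOn.upperSemicontinuousOn)
    simpa only [hf, sub_eq_add_neg] using this
  have hz₀N : z₀ ∈ N := Metric.mem_closedBall_self hρ.le
  obtain ⟨s, hs, hsρ, hsr⟩ : ∃ s > 0, s < ε * ρ ∧ s * (1 + ‖A‖ / ε) < r' := by
    refine ⟨min (ε * ρ) (r' / (1 + ‖A‖ / ε)) / 2, by positivity, ?_, ?_⟩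
    · have := min_le_left (ε * ρ) (r' / (1 + ‖A‖ / ε))
      have : 0 < ε * ρ := by positivity
      linarith
    · rw [← lt_div_iff₀ (by positivity)]
      have := min_le_right (ε * ρ) (r' / (1 + ‖A‖ / ε))
      have : 0 < r' / (1 + ‖A‖ / ε) := by positivity
      linarith
  have hdist : ∀ ξ z, IsPertMax f N ξ z → ε * ‖z - z₀‖ ≤ ‖ξ‖ := by
    intro ξ z hz
    have h1 := hz.2 z₀ hz₀N
    have h2 := (hρN hz.1).1
    have h3 : ξ (z - z₀) ≥ -(‖ξ‖ * ‖z - z₀‖) := by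
      have := ξ.le_opNorm (z - z₀)
      exact (abs_le.1 this).1
    have h4 : quadFn z₀ L A z₀ = 0 := by simp [quadFn]
    simp only [hf, h4] at h1
    rw [map_sub] at h3
    rcases (norm_nonneg (z - z₀)).eq_or_lt with h0 | h0
    · rw [← h0]; simp
    · refine le_of_mul_le_mul_right ?_ h0
      nlinarith
  have hnear : ∀ ξ ∈ Metric.ball (0 : Euc d × ℝ →L[ℝ] ℝ) s, ∀ z, IsPertMax f N ξ z →
      N ∈ 𝓝 z ∧ ‖(L + ξ + A (z - z₀)) - L‖ < r' := by
    intro ξ hξ z hz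
    rw [mem_ball_zero_iff] at hξ
    have h1 := hdist ξ z hz
    have h2 : ‖z - z₀‖ ≤ ‖ξ‖ / ε := by rw [le_div_iff₀ hε]; linarith
    constructor
    · refine Filter.mem_of_superset (Metric.isOpen_ball.mem_nhds (?_ : z ∈ Metric.ball z₀ ρ))
        Metric.ball_subset_closedBall
      rw [mem_ball_iff_norm]
      refine h2.trans_lt ?_
      rw [div_lt_iff₀ hε]
      linarith
    · have e : L + ξ + A (z - z₀) - L = ξ + A (z - z₀) := by abel
      rw [e]
      calc ‖ξ + A (z - z₀)‖ ≤ ‖ξ‖ + ‖A‖ * (‖ξ‖ / ε) :=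
            (norm_add_le _ _).trans (by gcongr; exact (A.le_opNorm _).trans (by gcongr))
        _ = ‖ξ‖ * (1 + ‖A‖ / ε) := by ring
        _ ≤ s * (1 + ‖A‖ / ε) := by gcongr
        _ < r' := hsr
  by_cases hirr : ∃ ξ ∈ Metric.ball (0 : Euc d × ℝ →L[ℝ] ℝ) s, ∃ z, IsPertMax f N ξ z ∧
      ¬ RatDir (gradPart d (L + ξ + A (z - z₀)))
  · obtain ⟨ξ, hξ, z, hz, hir⟩ := hirr
    obtain ⟨hzN, hLr⟩ := hnear ξ hξ z hz
    refine ⟨_, (hball _ hLr).1, h.jetOp_nonpos (hNU hz.1) ⟨hA, ?_⟩ hir⟩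
    filter_upwards [hzN] with y hy
    have h1 := hz.2 y hy
    have h2 := quadFn_sub_quadFn (L := L) (z₀ := z₀) hA z y
    simp only [hf] at h1
    simp only [quadFn, add_apply, map_sub] at h1 h2 ⊢
    linarith
  push Not at hirr
  set F : (Fin d → ℤ) → Set (Euc d × ℝ →L[ℝ] ℝ) := fun k =>
    {ξ | ∃ z, IsPertMax f N ξ z ∧
      gradPart d (L + ξ + A (z - z₀)) ∈ (Submodule.span ℝ {intVec k} : Set (Euc d))}
  have hFc : ∀ k, IsClosed (F k) := fun k =>
    isClosed_setOf_exists_isPertMax hNc hfusc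
      (G := fun ξ z => gradPart d (L + ξ + A (z - z₀))) (by fun_prop)
      (Submodule.closed_of_finiteDimensional _)
  have hcov : Metric.ball 0 s ⊆ ⋃ k, F k := by
    intro ξ hξ
    obtain ⟨z, hz⟩ := exists_isPertMax hNc ⟨z₀, hz₀N⟩ hfusc ξ
    obtain ⟨k, hk⟩ := (ratDir_iff _).1 (hirr ξ hξ z hz)
    exact mem_iUnion.2 ⟨k, z, hz, hk⟩
  obtain ⟨k, ξ₀, hξ₀, hinterior⟩ := exists_mem_interior_of_ball_subset hFc hs hcov
  obtain ⟨r₀, hr₀, hsub⟩ := Metric.isOpen_iff.1 isOpen_interior ξ₀ hinterior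
  have hsel : ∀ ξ, ∃ z, ξ ∈ Metric.ball ξ₀ r₀ → IsPertMax f N ξ z ∧
      gradPart d (L + ξ + A (z - z₀)) ∈ Submodule.span ℝ {intVec k} := by
    intro ξ
    by_cases hξ : ξ ∈ Metric.ball ξ₀ r₀
    · obtain ⟨z, hz⟩ := interior_subset (hsub hξ)
      exact ⟨z, fun _ => hz⟩
    · exact ⟨z₀, fun h' => absurd h' hξ⟩
  choose z hz using hsel
  have hmem₀ : ξ₀ ∈ Metric.ball ξ₀ r₀ := Metric.mem_ball_self hr₀
  set L' := L + ξ₀ + A (z ξ₀ - z₀) with hL'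
  obtain ⟨hzN, hLr⟩ := hnear ξ₀ hξ₀ _ (hz ξ₀ hmem₀).1
  obtain ⟨hLr, hL'0⟩ := hball _ hLr
  have hnorm : 0 < ‖gradPart d L'‖ := norm_pos_iff.2 hL'0
  set e := ‖gradPart d L'‖⁻¹ • gradPart d L' with he
  have he1 : ‖e‖ = 1 := by
    rw [he, norm_smul, norm_inv, norm_norm, inv_mul_cancel₀ hnorm.ne']
  obtain ⟨c, hc⟩ := Submodule.mem_span_singleton.1 (hz ξ₀ hmem₀).2
  have hc0 : c ≠ 0 := by
    rintro rfl
    exact hL'0 (by rw [← hc, zero_smul])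
  set W : Submodule ℝ (Euc d × ℝ) :=
    (LinearMap.ker (innerSL ℝ e).toLinearMap).map (LinearMap.inl ℝ (Euc d) ℝ)
  have hWmem : ∀ v : Euc d, inner ℝ e v = (0 : ℝ) → (v, (0 : ℝ)) ∈ W := fun v hv =>
    Submodule.mem_map.2 ⟨v, by simpa using hv, rfl⟩
  have hW : ∀ ξ ∈ Metric.ball ξ₀ r₀, ∀ v ∈ W, (L + ξ + A (z ξ - z₀)) v = 0 := by
    intro ξ hξ v hv
    obtain ⟨w, hw, rfl⟩ := Submodule.mem_map.1 hv
    have hw' : inner ℝ e w = (0 : ℝ) := by simpa using hw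
    have hkw : inner ℝ (intVec k) w = (0 : ℝ) := by
      have h1 : inner ℝ (gradPart d L') w = (0 : ℝ) := by
        rw [he, inner_smul_left] at hw'
        exact (mul_eq_zero.1 hw').resolve_left (inv_ne_zero hnorm.ne')
      rw [show gradPart d L' = c • intVec k from hc.symm, inner_smul_left] at h1
      exact (mul_eq_zero.1 h1).resolve_left hc0
    obtain ⟨b, hb⟩ := Submodule.mem_span_singleton.1 (hz ξ hξ).2
    have := inner_gradPart (L + ξ + A (z ξ - z₀)) w
    rw [← hb, inner_smul_left, hkw, mul_zero] at this
    exact this.symm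
  have hzmax : ∀ ξ ∈ Metric.ball ξ₀ r₀, IsPertMax f N ξ (z ξ) := fun ξ hξ => (hz ξ hξ).1
  set σ : Euc d × ℝ →L[ℝ] Euc d × ℝ :=
    (((innerSL ℝ e).smulRight e).comp (ContinuousLinearMap.fst ℝ (Euc d) ℝ)).prod
      (ContinuousLinearMap.snd ℝ (Euc d) ℝ) with hσdef
  have hσ : ∀ v, σ v = (inner ℝ e v.1 • e, v.2) := fun v => by simp [hσdef]
  have hjet := isSuperjet_of_contact_annihilates hA hr₀ hzmax hW hzN (σ := σ) fun v => by
    rw [hσ]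
    have : ((inner ℝ e v.1 • e, v.2) : Euc d × ℝ) - v = (inner ℝ e v.1 • e - v.1, 0) := by
      ext <;> simp
    rw [this]
    apply hWmem
    simp [inner_sub_right, inner_smul_right, he1]
  have htime : L' (0, 1) ≤ 0 :=
    h.time_nonpos (hNU (hzmax ξ₀ hmem₀).1) hjet ((ratDir_iff _).2 ⟨k, (hz ξ₀ hmem₀).2⟩) hL'0
      (hessPart_flat he1 A fun v => hσ (v, 0))
  have htrace : 0 ≤ clTrace ((projPerp e).comp (hessPart A)) := by
    refine clTrace_projPerp_comp_nonneg he1 fun v hv => ?_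
    rw [inner_hessPart]
    exact nonneg_of_contact_annihilates hA hr₀ hzmax hW (hWmem v hv)
  refine ⟨L', hLr, ?_⟩
  have := mul_nonpos_of_nonneg_of_nonpos (hmb e he1) htime
  rw [jetOp, ← he]
  linarith

lemma continuous_clTrace : Continuous (clTrace : (Euc d →L[ℝ] Euc d) → ℝ) := by
  let l : (Euc d →L[ℝ] Euc d) →ₗ[ℝ] ℝ :=
    { toFun := clTrace, map_add' := clTrace_add, map_smul' := clTrace_smul }
  exact l.continuous_of_finiteDimensional

lemma continuousAt_jetOp (hmbc : ContinuousOn mb (Metric.sphere (0 : Euc d) 1))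
    {L : Euc d × ℝ →L[ℝ] ℝ} (hL : gradPart d L ≠ 0)
    (A : Euc d × ℝ →L[ℝ] Euc d × ℝ →L[ℝ] ℝ) : ContinuousAt (fun L' => jetOp mb L' A) L := by
  have hn : ContinuousAt (fun L' => ‖gradPart d L'‖⁻¹ • gradPart d L') L :=
    ((gradPart d).continuous.norm.continuousAt.inv₀ (norm_ne_zero_iff.2 hL)).smul
      (gradPart d).continuous.continuousAt
  have hunit : ∀ L' : Euc d × ℝ →L[ℝ] ℝ, gradPart d L' ≠ 0 →
      ‖gradPart d L'‖⁻¹ • gradPart d L' ∈ Metric.sphere (0 : Euc d) 1 := fun L' hL' => by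
    rw [mem_sphere_zero_iff_norm, norm_smul, norm_inv, norm_norm,
      inv_mul_cancel₀ (norm_ne_zero_iff.2 hL')]
  have hm : ContinuousAt (fun L' => mb (‖gradPart d L'‖⁻¹ • gradPart d L')) L :=
    (hmbc _ (hunit L hL)).tendsto.comp (tendsto_nhdsWithin_iff.2 ⟨hn,
      ((gradPart d).continuous.continuousAt.eventually_ne hL).mono hunit⟩)
  have hp : Continuous (projPerp : Euc d → Euc d →L[ℝ] Euc d) := by
    unfold projPerp
    exact continuous_const.sub
      (((ContinuousLinearMap.smulRightL ℝ (Euc d) (Euc d)).continuous₂).comp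
        ((innerSL ℝ).continuous.prodMk continuous_id))
  have ht : ContinuousAt (fun L' : Euc d × ℝ →L[ℝ] ℝ =>
      clTrace ((projPerp (‖gradPart d L'‖⁻¹ • gradPart d L')).comp (hessPart A))) L :=
    continuous_clTrace.continuousAt.comp
      ((hp.continuousAt.comp hn).clm_comp continuousAt_const)
  exact (hm.mul (by fun_prop)).sub ht

end Main

end SpaceTimeJet

/-- Theorem 2.2: a subsolution of the effective equation in irrational directions
is a viscosity subsolution in the usual sense. -/
theorem irrational_directions_implies_viscosity_subsolution
    (d : ℕ) (hd : 2 ≤ d) (θ Θ : ℝ) (hθ : 0 < θ) (hθΘ : θ ≤ Θ)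
    (mb : Euc d → ℝ) (hmbc : ContinuousOn mb (Metric.sphere (0 : Euc d) 1))
    (hmbr : ∀ e : Euc d, ‖e‖ = 1 → mb e ∈ Set.Icc θ Θ)
    (U : Set (Euc d × ℝ)) (hUo : IsOpen U) (hU : U ⊆ {p : Euc d × ℝ | 0 < p.2})
    (ut : Euc d × ℝ → ℝ)
    (hloc : ∀ p₀ : Euc d × ℝ, 0 < p₀.2 → ∃ V ∈ nhds p₀, ∃ C : ℝ, ∀ p ∈ V, |ut p| ≤ C)
    (husc : UpperSemicontinuousOn ut {p : Euc d × ℝ | 0 < p.2})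
    (hK : ∃ K > 0, ∀ φ : Euc d × ℝ → ℝ, ContDiff ℝ (⊤ : ℕ∞) φ →
      ∀ (x : Euc d) (t : ℝ), (x, t) ∈ U →
        StrictLocalMax (fun p => ut p - φ p) (x, t) →
        (¬ RatDir (spaceGrad φ x t) → effOp mb φ x t ≤ 0) ∧
        (RatDir (spaceGrad φ x t) → spaceGrad φ x t ≠ 0 →
          ∀ δ > 0,
            ‖(projPerp (‖spaceGrad φ x t‖⁻¹ • spaceGrad φ x t)).comp (spaceHess φ x t)‖
              ≤ δ * ‖spaceGrad φ x t‖ →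
            timeDeriv φ x t ≤ K * δ * ‖spaceGrad φ x t‖) ∧
        (spaceGrad φ x t = 0 → spaceHess φ x t = 0 → timeDeriv φ x t ≤ 0)) :
    ∀ φ : Euc d × ℝ → ℝ, ContDiff ℝ (⊤ : ℕ∞) φ →
      ∀ (x : Euc d) (t : ℝ), (x, t) ∈ U →
        StrictLocalMax (fun p => ut p - φ p) (x, t) →
        (spaceGrad φ x t ≠ 0 → effOp mb φ x t ≤ 0) ∧
        (spaceGrad φ x t = 0 → spaceHess φ x t = 0 → timeDeriv φ x t ≤ 0) := by
  obtain ⟨K, -, hK⟩ := hK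
  intro φ hφ x t hxt hmax
  refine ⟨fun hgrad => ?_, (hK φ hφ x t hxt hmax).2.2⟩
  have hd : Differentiable ℝ φ := hφ.differentiable (by simp)
  have hd' : Differentiable ℝ (fderiv ℝ φ) :=
    (hφ.fderiv_right (m := 1) (by norm_cast)).differentiable one_ne_zero
  have hsymm : ∀ v w, fderiv ℝ (fderiv ℝ φ) (x, t) v w = fderiv ℝ (fderiv ℝ φ) (x, t) w v :=
    hφ.contDiffAt.isSymmSndFDerivAt (by
      rw [minSmoothness_of_isRCLikeNormedField]
      exact WithTop.coe_le_coe.2 (le_top : (2 : ℕ∞) ≤ ⊤))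
  rw [SpaceTimeJet.spaceGrad_eq hd] at hgrad
  rw [SpaceTimeJet.effOp_eq mb hd hd']
  refine SpaceTimeJet.jetOp_nonpos_of_forall_pos (B := SpaceTimeJet.spaceTimeInner d)
    fun ε hε => ?_
  set L := fderiv ℝ φ (x, t)
  set A := fderiv ℝ (fderiv ℝ φ) (x, t)
  have hcontact : ∀ᶠ z in 𝓝 (x, t), ut z ≤ ut (x, t) +
      SpaceTimeJet.quadFn (x, t) L (A + ε • SpaceTimeJet.spaceTimeInner d) z
        - ε / 4 * ‖z - (x, t)‖ ^ 2 := by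
    obtain ⟨V, hV, hVmax⟩ := hmax
    filter_upwards [hV, SpaceTimeJet.eventually_le_quadFn hd hd' (x, t) hsymm
      (show 0 < ε / 4 by positivity)] with z hz hT
    have h1 : ut z - φ z ≤ ut (x, t) - φ (x, t) := by
      by_cases hne : z = (x, t)
      · rw [hne]
      · exact (hVmax z hz hne).le
    have h2 := SpaceTimeJet.norm_sq_le_spaceTimeInner (z - (x, t))
    have h3 := mul_le_mul_of_nonneg_left h2 hε.le
    simp only [SpaceTimeJet.quadFn, add_apply, smul_apply, smul_eq_mul] at hT ⊢
    linarith
  have happrox := fun (r : ℝ) (hr : 0 < r) =>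
    SpaceTimeJet.IrrationalSubsolution.exists_approx_jetOp_nonpos hK
      (fun e he => hθ.le.trans (hmbr e he).1) hUo (husc.mono hU) hxt
      (fun v w => by
        simp only [add_apply, smul_apply, hsymm v w, SpaceTimeJet.spaceTimeInner_comm v w, A])
      (show 0 < ε / 4 by positivity) hcontact hgrad hr
  by_contra! hlt
  have hev := (SpaceTimeJet.continuousAt_jetOp hmbc hgrad
    (A + ε • SpaceTimeJet.spaceTimeInner d)).eventually_const_lt hlt
  obtain ⟨r, hr, hpos⟩ := Metric.eventually_nhds_iff.1 hev
  obtain ⟨L', hL', hle⟩ := happrox r hr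
  exact (hpos (by rwa [dist_eq_norm])).not_ge hle

end
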